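/- arXiv:math/9502222 — 2 statements merged into one kernel-verified Lean document; each statement's English description precedes it below -/
import Mathlib

section
/- The Richman cost function of D is unique: if R₁ and R₂ are both Richman cost functions on D, then R₁(v) = R₂(v) for every vertex v. -/
open Relation Filter

variable {V : Type*}

/-- `fplus E f v` is `f⁺(v) = sup_{w ∈ S(v)} f(w)`, where `S(v)` is the set of successors of `v`. -/
noncomputable def fplus (E : V → V → Prop) (f : V → ℝ) (v : V) : ℝ :=
  sSup (f '' {w | E v w})

/-- `fminus E f v` is `f⁻(v) = inf_{u ∈ S(v)} f(u)`. -/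
noncomputable def fminus (E : V → V → Prop) (f : V → ℝ) (v : V) : ℝ :=
  sInf (f '' {w | E v w})

/-- A Richman cost function: `R : V → [0,1]`, `R(b) = 0`, `R(r) = 1`, and
`R(v) = (R⁺(v) + R⁻(v))/2` for every `v ∉ {b, r}`. -/
def IsRichman (E : V → V → Prop) (b r : V) (R : V → ℝ) : Prop :=
  (∀ v, R v ∈ Set.Icc (0 : ℝ) 1) ∧ R b = 0 ∧ R r = 1 ∧
    ∀ v, v ≠ b → v ≠ r → R v = (fplus E R v + fminus E R v) / 2

/-!
Let `f` be a subsolution and `g` a supersolution of `f = (f⁺ + f⁻)/2`. At a vertex where `f - g` is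
maximal, `f⁻ - g⁻` is at most this maximum, so `f⁺ - g⁺` is at least it, and a successor
maximizing `f` again maximizes `f - g`. Hence, if the vertex was chosen with `f` largest among the
maximizers of `f - g`, then `f⁺ ≤ f ≤ (f⁺ + f⁻)/2`, which forces `f`, and then `g`, to be constant
on the successors. Both stay constant along every path until it meets the boundary, where `f - g`
therefore attains its maximum.
-/

section Successors

variable {E : V → V → Prop} {f g : V → ℝ} {v w : V} {M : ℝ} [Finite {w | E v w}]

theorem le_fplus (hvw : E v w) : f w ≤ fplus E f v :=
  le_csSup (Set.toFinite _).bddAbove (Set.mem_image_of_mem f hvw)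

theorem fminus_le (hvw : E v w) : fminus E f v ≤ f w :=
  csInf_le (Set.toFinite _).bddBelow (Set.mem_image_of_mem f hvw)

theorem exists_eq_fplus (hv : ∃ w, E v w) : ∃ w, E v w ∧ f w = fplus E f v :=
  (Set.Nonempty.image f hv).csSup_mem ((Set.toFinite {w | E v w}).image f)

theorem exists_eq_fminus (hv : ∃ w, E v w) : ∃ w, E v w ∧ f w = fminus E f v :=
  (Set.Nonempty.image f hv).csInf_mem ((Set.toFinite {w | E v w}).image f)

theorem fminus_sub_fminus_le (hv : ∃ w, E v w) (hM : ∀ w, E v w → f w - g w ≤ M) :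
    fminus E f v - fminus E g v ≤ M := by
  obtain ⟨w, hvw, hw⟩ := exists_eq_fminus (f := g) hv
  linarith [hM w hvw, fminus_le (f := f) hvw]

theorem fplus_le_of_toLex_le (hv : ∃ w, E v w)
    (hmax : ∀ w, E v w → toLex (f w - g w, f w) ≤ toLex (f v - g v, f v))
    (hplus : f v - g v ≤ fplus E f v - fplus E g v) : fplus E f v ≤ f v := by
  obtain ⟨w, hvw, hw⟩ := exists_eq_fplus (f := f) hv
  have hgap : f v - g v ≤ f w - g w := by linarith [le_fplus (f := g) hvw]
  rcases Prod.Lex.toLex_le_toLex.mp (hmax w hvw) with hlt | ⟨-, hle⟩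
  · exact absurd hlt hgap.not_gt
  · exact hw ▸ hle

theorem eq_of_fplus_le_of_le_fminus {a : ℝ} (hplus : fplus E f v ≤ a) (hminus : a ≤ fminus E f v)
    (hvw : E v w) : f w = a :=
  le_antisymm ((le_fplus hvw).trans hplus) (hminus.trans (fminus_le hvw))

theorem eq_and_eq_of_toLex_le (hf : f v ≤ (fplus E f v + fminus E f v) / 2)
    (hg : (fplus E g v + fminus E g v) / 2 ≤ g v)
    (hmax : ∀ w, E v w → toLex (f w - g w, f w) ≤ toLex (f v - g v, f v)) (hvw : E v w) :
    f w = f v ∧ g w = g v := by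
  have hgap (u : V) (hvu : E v u) : f u - g u ≤ f v - g v :=
    Prod.Lex.monotone_fst _ _ (hmax u hvu)
  have hminus : fminus E f v - fminus E g v ≤ f v - g v := fminus_sub_fminus_le ⟨w, hvw⟩ hgap
  have hplus : f v - g v ≤ fplus E f v - fplus E g v := by linarith
  have hf_plus : fplus E f v ≤ f v := fplus_le_of_toLex_le ⟨w, hvw⟩ hmax hplus
  have hf_minus : f v ≤ fminus E f v := by linarith
  have hg_minus : g v ≤ fminus E g v := by linarith
  have hg_plus : fplus E g v ≤ g v := by linarith
  exact ⟨eq_of_fplus_le_of_le_fminus hf_plus hf_minus hvw,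
    eq_of_fplus_le_of_le_fminus hg_plus hg_minus hvw⟩

end Successors

/-- A subsolution of the Richman equation with boundary `B`: off `B`, the value at a vertex is at
most the average of the extreme values at its successors. -/
def IsRichmanSubsolution (E : V → V → Prop) (B : Set V) (f : V → ℝ) : Prop :=
  ∀ v ∉ B, f v ≤ (fplus E f v + fminus E f v) / 2

/-- A supersolution of the Richman equation with boundary `B`: off `B`, the value at a vertex is at
least the average of the extreme values at its successors. -/
def IsRichmanSupersolution (E : V → V → Prop) (B : Set V) (f : V → ℝ) : Prop :=
  ∀ v ∉ B, (fplus E f v + fminus E f v) / 2 ≤ f v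

namespace IsRichmanSubsolution

variable {E : V → V → Prop} {B : Set V} {f g : V → ℝ}

theorem exists_mem_eq_and_eq_of_reflTransGen [∀ v, Finite {w | E v w}]
    (hf : IsRichmanSubsolution E B f) (hg : IsRichmanSupersolution E B g) {v t : V}
    (hvt : ReflTransGen E v t) (ht : t ∈ B)
    (hmax : ∀ w, toLex (f w - g w, f w) ≤ toLex (f v - g v, f v)) :
    ∃ s ∈ B, f s = f v ∧ g s = g v := by
  induction hvt using ReflTransGen.head_induction_on with
  | refl => exact ⟨t, ht, rfl, rfl⟩
  | @head v w hvw _ ih =>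
    by_cases hv : v ∈ B
    · exact ⟨v, hv, rfl, rfl⟩
    · obtain ⟨hfw, hgw⟩ := eq_and_eq_of_toLex_le (hf v hv) (hg v hv) (fun u _ => hmax u) hvw
      rw [hfw, hgw] at ih
      exact ih hmax

theorem exists_mem_sub_le_sub [Finite V] (hf : IsRichmanSubsolution E B f)
    (hg : IsRichmanSupersolution E B g) (hreach : ∀ v, ∃ t ∈ B, ReflTransGen E v t) (v : V) :
    ∃ t ∈ B, f v - g v ≤ f t - g t := by
  have : Nonempty V := ⟨v⟩
  obtain ⟨c, hmax⟩ := Finite.exists_max fun u => toLex (f u - g u, f u)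
  obtain ⟨t, ht, hct⟩ := hreach c
  obtain ⟨s, hs, hfs, hgs⟩ := hf.exists_mem_eq_and_eq_of_reflTransGen hg hct ht hmax
  exact ⟨s, hs, hfs ▸ hgs ▸ Prod.Lex.monotone_fst _ _ (hmax v)⟩

theorem le_of_forall_mem_le [Finite V] (hf : IsRichmanSubsolution E B f)
    (hg : IsRichmanSupersolution E B g) (hreach : ∀ v, ∃ t ∈ B, ReflTransGen E v t)
    (hB : ∀ t ∈ B, f t ≤ g t) : f ≤ g := by
  intro v
  obtain ⟨t, ht, hvt⟩ := hf.exists_mem_sub_le_sub hg hreach v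
  linarith [hB t ht]

end IsRichmanSubsolution

theorem richman_unique_general [Finite V] {E : V → V → Prop} {B : Set V} {f g : V → ℝ}
    (hreach : ∀ v, ∃ t ∈ B, ReflTransGen E v t)
    (hf : ∀ v ∉ B, f v = (fplus E f v + fminus E f v) / 2)
    (hg : ∀ v ∉ B, g v = (fplus E g v + fminus E g v) / 2)
    (hB : Set.EqOn f g B) : f = g := by
  have hf_sub : IsRichmanSubsolution E B f := fun v hv => (hf v hv).le
  have hf_super : IsRichmanSupersolution E B f := fun v hv => (hf v hv).ge
  have hg_sub : IsRichmanSubsolution E B g := fun v hv => (hg v hv).le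
  have hg_super : IsRichmanSupersolution E B g := fun v hv => (hg v hv).ge
  exact le_antisymm (hf_sub.le_of_forall_mem_le hg_super hreach fun t ht => (hB ht).le)
    (hg_sub.le_of_forall_mem_le hf_super hreach fun t ht => (hB ht).ge)

/-- Uniqueness of the Richman cost function. -/
theorem richman_unique [Fintype V] [DecidableEq V] (E : V → V → Prop) (b r : V)
    (hbr : b ≠ r)
    (hreach : ∀ v, ReflTransGen E v b ∨ ReflTransGen E v r)
    (R₁ R₂ : V → ℝ) (h₁ : IsRichman E b r R₁) (h₂ : IsRichman E b r R₂) :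
    ∀ v, R₁ v = R₂ v := by
  obtain ⟨-, hb₁, hr₁, hmean₁⟩ := h₁
  obtain ⟨-, hb₂, hr₂, hmean₂⟩ := h₂
  have hreach' (v : V) : ∃ t ∈ ({b, r} : Set V), ReflTransGen E v t := by simpa using hreach v
  have hboundary : Set.EqOn R₁ R₂ {b, r} := by
    rintro v (rfl | rfl)
    exacts [hb₁.trans hb₂.symm, hr₁.trans hr₂.symm]
  exact congrFun <| richman_unique_general hreach' (by simpa using hmean₁) (by simpa using hmean₂)
    hboundary
end

section
/- Let R be any Richman cost function on D. Define R(v,t) by R(b,t) = 0, R(r,t) = 1 for all t, R(v,0) = 1 for v ∉ {b,r}, R(v,t) = (R⁺(v,t−1) + R⁻(v,t−1))/2 for v ∉ {b,r}, t > 0; and define R′(v,t) identically except R′(v,0) = 0 for v ∉ {b,r}. Then for every vertex v and every t ≥ 0, R′(v,t) ≤ R(v) ≤ R(v,t). -/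
open Relation Filter

variable {V : Type*}

/-- The auxiliary function `R(v,t)`: `R(b,t) = 0`, `R(r,t) = 1`, `R(v,0) = 1` for `v ∉ {b,r}`,
and `R(v,t) = (R⁺(v,t-1) + R⁻(v,t-1))/2` for `v ∉ {b,r}`, `t > 0`. -/
noncomputable def Rseq [DecidableEq V] (E : V → V → Prop) (b r : V) : ℕ → V → ℝ
  | 0 => fun v => if v = b then 0 else 1
  | t + 1 => fun v =>
      if v = b then 0
      else if v = r then 1
      else (fplus E (Rseq E b r t) v + fminus E (Rseq E b r t) v) / 2

/-- The auxiliary function `R'(v,t)`: `R'(b,t) = 0`, `R'(r,t) = 1`, `R'(v,0) = 0` for `v ∉ {b,r}`,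
and `R'(v,t) = (R'⁺(v,t-1) + R'⁻(v,t-1))/2` for `v ∉ {b,r}`, `t > 0`. -/
noncomputable def Rseq' [DecidableEq V] (E : V → V → Prop) (b r : V) : ℕ → V → ℝ
  | 0 => fun v => if v = r then 1 else 0
  | t + 1 => fun v =>
      if v = b then 0
      else if v = r then 1
      else (fplus E (Rseq' E b r t) v + fminus E (Rseq' E b r t) v) / 2

/-!
A Richman cost function `R` is a fixed point of the one-round update operator, which is monotone on
functions with values in `[0, 1]`. Its starting values satisfy `R'(·, 0) ≤ R ≤ R(·, 0)`, and
iterating the operator preserves both inequalities while leaving `R` unchanged.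
-/

theorem iterate_le_iterate_of_monotoneOn {α : Type*} [Preorder α] {Φ : α → α} {s : Set α}
    (hmono : MonotoneOn Φ s) (hmaps : Set.MapsTo Φ s s) {x y : α} (hx : x ∈ s) (hy : y ∈ s)
    (hxy : x ≤ y) (n : ℕ) : Φ^[n] x ≤ Φ^[n] y := by
  induction n with
  | zero => exact hxy
  | succ n ih =>
    rw [Function.iterate_succ_apply', Function.iterate_succ_apply']
    exact hmono (hmaps.iterate n hx) (hmaps.iterate n hy) ih

theorem exists_successor_of_reflTransGen {E : V → V → Prop} {v w : V} (h : ReflTransGen E v w)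
    (hvw : v ≠ w) : ∃ u, E v u := by
  obtain rfl | ⟨u, hvu, -⟩ := h.cases_head
  · exact absurd rfl hvw
  · exact ⟨u, hvu⟩

section Successors

variable {E : V → V → Prop} {f g : V → ℝ} {v : V}

theorem fplus_mono (hv : {w | E v w}.Nonempty) (hg : BddAbove (g '' {w | E v w}))
    (hfg : ∀ w, E v w → f w ≤ g w) : fplus E f v ≤ fplus E g v := by
  refine csSup_le (hv.image f) ?_
  rintro _ ⟨w, hw, rfl⟩
  exact le_csSup_of_le hg ⟨w, hw, rfl⟩ (hfg w hw)

theorem fminus_mono (hv : {w | E v w}.Nonempty) (hf : BddBelow (f '' {w | E v w}))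
    (hfg : ∀ w, E v w → f w ≤ g w) : fminus E f v ≤ fminus E g v := by
  refine le_csInf (hv.image g) ?_
  rintro _ ⟨w, hw, rfl⟩
  exact csInf_le_of_le hf ⟨w, hw, rfl⟩ (hfg w hw)

theorem fplus_mem_of_isClosed {C : Set ℝ} (hC : IsClosed C) (hbdd : BddAbove C)
    (hv : {w | E v w}.Nonempty) (hf : Set.MapsTo f {w | E v w} C) : fplus E f v ∈ C :=
  closure_minimal hf.image_subset hC
    (csSup_mem_closure (hv.image f) (hbdd.mono hf.image_subset))

theorem fminus_mem_of_isClosed {C : Set ℝ} (hC : IsClosed C) (hbdd : BddBelow C)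
    (hv : {w | E v w}.Nonempty) (hf : Set.MapsTo f {w | E v w} C) : fminus E f v ∈ C :=
  closure_minimal hf.image_subset hC
    (csInf_mem_closure (hv.image f) (hbdd.mono hf.image_subset))

end Successors

theorem IsRichman.mem_Icc {E : V → V → Prop} {b r : V} {R : V → ℝ} (hR : IsRichman E b r R) :
    R ∈ Set.Icc (0 : V → ℝ) 1 :=
  ⟨fun v => (hR.1 v).1, fun v => (hR.1 v).2⟩

section Iteration

variable [DecidableEq V] {E : V → V → Prop} {b r : V}

/-- The Richman update operator: it resets the values at `b` and `r` to `0` and `1`, and replaces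
the value at any other vertex `v` by `(f⁺(v) + f⁻(v))/2`. Both `R(·, t)` and `R'(·, t)` are its
iterates, and Richman cost functions are fixed by it. -/
noncomputable def richmanStep (E : V → V → Prop) (b r : V) (f : V → ℝ) (v : V) : ℝ :=
  if v = b then 0
  else if v = r then 1
  else (fplus E f v + fminus E f v) / 2

theorem mapsTo_richmanStep (hsucc : ∀ v, v ≠ b → v ≠ r → ∃ w, E v w) :
    Set.MapsTo (richmanStep E b r) (Set.Icc 0 1) (Set.Icc 0 1) := by
  intro f hf
  have step_mem (v : V) : richmanStep E b r f v ∈ Set.Icc (0 : ℝ) 1 := by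
    unfold richmanStep
    split_ifs with hvb hvr
    · exact ⟨le_rfl, zero_le_one⟩
    · exact ⟨zero_le_one, le_rfl⟩
    · have hv : {w | E v w}.Nonempty := hsucc v hvb hvr
      have hmaps : Set.MapsTo f {w | E v w} (Set.Icc 0 1) := fun w _ => ⟨hf.1 w, hf.2 w⟩
      obtain ⟨plus_nonneg, plus_le_one⟩ := fplus_mem_of_isClosed isClosed_Icc bddAbove_Icc hv hmaps
      obtain ⟨minus_nonneg, minus_le_one⟩ :=
        fminus_mem_of_isClosed isClosed_Icc bddBelow_Icc hv hmaps
      constructor <;> linarith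
  exact ⟨fun v => (step_mem v).1, fun v => (step_mem v).2⟩

theorem monotoneOn_richmanStep (hsucc : ∀ v, v ≠ b → v ≠ r → ∃ w, E v w) :
    MonotoneOn (richmanStep E b r) (Set.Icc 0 1) := by
  intro f hf g hg hfg v
  unfold richmanStep
  split_ifs with hvb hvr
  · exact le_rfl
  · exact le_rfl
  · have hv : {w | E v w}.Nonempty := hsucc v hvb hvr
    have g_bddAbove : BddAbove (g '' {w | E v w}) := ⟨1, Set.forall_mem_image.2 fun w _ => hg.2 w⟩
    have f_bddBelow : BddBelow (f '' {w | E v w}) := ⟨0, Set.forall_mem_image.2 fun w _ => hf.1 w⟩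
    have plus_le : fplus E f v ≤ fplus E g v := fplus_mono hv g_bddAbove fun w _ => hfg w
    have minus_le : fminus E f v ≤ fminus E g v := fminus_mono hv f_bddBelow fun w _ => hfg w
    linarith

theorem Rseq_eq_iterate_richmanStep (t : ℕ) :
    Rseq E b r t = (richmanStep E b r)^[t] (Rseq E b r 0) := by
  induction t with
  | zero => rfl
  | succ t ih =>
    rw [Function.iterate_succ_apply', ← ih]
    rfl

theorem Rseq'_eq_iterate_richmanStep (t : ℕ) :
    Rseq' E b r t = (richmanStep E b r)^[t] (Rseq' E b r 0) := by
  induction t with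
  | zero => rfl
  | succ t ih =>
    rw [Function.iterate_succ_apply', ← ih]
    rfl

theorem Rseq_zero_mem_Icc : Rseq E b r 0 ∈ Set.Icc (0 : V → ℝ) 1 := by
  constructor <;> intro v <;> by_cases hvb : v = b <;> simp [Rseq, hvb]

theorem Rseq'_zero_mem_Icc : Rseq' E b r 0 ∈ Set.Icc (0 : V → ℝ) 1 := by
  constructor <;> intro v <;> by_cases hvr : v = r <;> simp [Rseq', hvr]

namespace IsRichman

variable {R : V → ℝ}

theorem isFixedPt_richmanStep (hR : IsRichman E b r R) :
    Function.IsFixedPt (richmanStep E b r) R := by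
  obtain ⟨-, hb, hr, havg⟩ := hR
  funext v
  unfold richmanStep
  split_ifs with hvb hvr
  · rw [hvb, hb]
  · rw [hvr, hr]
  · exact (havg v hvb hvr).symm

theorem le_Rseq_zero (hR : IsRichman E b r R) : R ≤ Rseq E b r 0 := by
  intro v
  by_cases hvb : v = b
  · simp [Rseq, hvb, hR.2.1]
  · simpa [Rseq, hvb] using (hR.1 v).2

theorem Rseq'_zero_le (hR : IsRichman E b r R) : Rseq' E b r 0 ≤ R := by
  intro v
  by_cases hvr : v = r
  · simp [Rseq', hvr, hR.2.2.1]
  · simpa [Rseq', hvr] using (hR.1 v).1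

end IsRichman

end Iteration

theorem richman_between_Rseq_general [DecidableEq V] (E : V → V → Prop) (b r : V)
    (hsucc : ∀ v, v ≠ b → v ≠ r → ∃ w, E v w) (R : V → ℝ) (hR : IsRichman E b r R) :
    ∀ (v : V) (t : ℕ), Rseq' E b r t v ≤ R v ∧ R v ≤ Rseq E b r t v := by
  intro v t
  have iterate_mono {f g : V → ℝ} (hf : f ∈ Set.Icc 0 1) (hg : g ∈ Set.Icc 0 1) (hfg : f ≤ g) :
      (richmanStep E b r)^[t] f ≤ (richmanStep E b r)^[t] g :=
    iterate_le_iterate_of_monotoneOn (monotoneOn_richmanStep hsucc) (mapsTo_richmanStep hsucc)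
      hf hg hfg t
  have iterate_R : (richmanStep E b r)^[t] R = R := hR.isFixedPt_richmanStep.iterate t
  have lower : Rseq' E b r t ≤ R := by
    rw [Rseq'_eq_iterate_richmanStep, ← iterate_R]
    exact iterate_mono Rseq'_zero_mem_Icc hR.mem_Icc hR.Rseq'_zero_le
  have upper : R ≤ Rseq E b r t := by
    rw [Rseq_eq_iterate_richmanStep, ← iterate_R]
    exact iterate_mono hR.mem_Icc Rseq_zero_mem_Icc hR.le_Rseq_zero
  exact ⟨lower v, upper v⟩

/-- Any Richman cost function is sandwiched between the two auxiliary iterations: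
`R'(v,t) ≤ R(v) ≤ R(v,t)` for every `v` and `t`. -/
theorem richman_between_Rseq [Fintype V] [DecidableEq V] (E : V → V → Prop) (b r : V)
    (hbr : b ≠ r)
    (hreach : ∀ v, ReflTransGen E v b ∨ ReflTransGen E v r)
    (R : V → ℝ) (hR : IsRichman E b r R) :
    ∀ (v : V) (t : ℕ), Rseq' E b r t v ≤ R v ∧ R v ≤ Rseq E b r t v :=
  richman_between_Rseq_general E b r (fun v hvb hvr => (hreach v).elim
    (exists_successor_of_reflTransGen · hvb) (exists_successor_of_reflTransGen · hvr)) R hR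
end
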